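/- arXiv:1912.05919 — 4 statements merged into one kernel-verified Lean document; each statement's English description precedes it below -/
import Mathlib

section
/- Let p be a prime with p ≥ 7 and p ≡ 3 (mod 4). Then: (i) there exist nonzero squares a, b ∈ ZMod p such that a + b is a nonzero square; and (ii) there exist nonzero squares a, b ∈ ZMod p such that a + b is nonzero and is not a square. (In the quotient hyperfield W = F_p/(F_p^×)², together with the fact that a sum of two nonzero squares is nonzero, this says [1] ⊞ [1] = {[1], [−1]}, i.e., F_p/(F_p^×)² realizes the addition table of the weak hyperfield of signs on the class [1].) -/
/-- For a prime `p ≥ 7` with `p ≡ 3 (mod 4)`: (i) some sum of two nonzero squares in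
`ZMod p` is a nonzero square, and (ii) some sum of two nonzero squares is nonzero and not
a square. (In `W = F_p/(F_p^×)²` this realizes `[1] ⊞ [1] = {[1], [−1]}`.) -/
theorem sum_of_nonzero_squares_both_classes (p : ℕ) [Fact p.Prime]
    (hp7 : 7 ≤ p) (hp : p % 4 = 3) :
    (∃ a b : ZMod p, (a ≠ 0 ∧ ∃ u, a = u ^ 2) ∧ (b ≠ 0 ∧ ∃ v, b = v ^ 2) ∧
      (a + b ≠ 0 ∧ ∃ w, a + b = w ^ 2)) ∧
    (∃ a b : ZMod p, (a ≠ 0 ∧ ∃ u, a = u ^ 2) ∧ (b ≠ 0 ∧ ∃ v, b = v ^ 2) ∧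
      (a + b ≠ 0 ∧ ¬∃ w, a + b = w ^ 2)) := by
  have key : ∀ n : ℕ, 0 < n → n < 7 → (n : ZMod p) ≠ 0 := by
    intro n h0 h7 h
    rw [ZMod.natCast_eq_zero_iff] at h
    have := Nat.le_of_dvd h0 h
    omega
  have hns : ¬ ∃ w : ZMod p, (-1 : ZMod p) = w ^ 2 := by
    rintro ⟨w, hw⟩
    exact ZMod.mod_four_ne_three_of_sq_eq_neg_one hw.symm hp
  have h3 : (3 : ZMod p) ≠ 0 := by exact_mod_cast key 3 (by norm_num) (by norm_num)
  have h4 : (4 : ZMod p) ≠ 0 := by exact_mod_cast key 4 (by norm_num) (by norm_num)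
  have h5 : (5 : ZMod p) ≠ 0 := by exact_mod_cast key 5 (by norm_num) (by norm_num)
  have e : (3 : ZMod p) ^ 2 + 4 ^ 2 = 5 ^ 2 := by norm_num
  refine ⟨⟨3 ^ 2, 4 ^ 2, ⟨pow_ne_zero 2 h3, 3, rfl⟩, ⟨pow_ne_zero 2 h4, 4, rfl⟩, ?_⟩, ?_⟩
  · rw [e]
    exact ⟨pow_ne_zero 2 h5, 5, rfl⟩
  · obtain ⟨x, y, hxy⟩ := ZMod.sq_add_sq p (-1)
    refine ⟨x ^ 2, y ^ 2, ⟨?_, x, rfl⟩, ⟨?_, y, rfl⟩, ?_⟩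
    · intro h
      exact hns ⟨y, by rw [← hxy, h, zero_add]⟩
    · intro h
      exact hns ⟨x, by rw [← hxy, h, add_zero]⟩
    · rw [hxy]
      exact ⟨neg_ne_zero.mpr one_ne_zero, hns⟩
end

section
/- Let p be a prime with p ≥ 7 and p ≡ 3 (mod 4). Then: (i) there exist a nonzero square s ∈ ZMod p and a nonzero non-square n ∈ ZMod p with s + n = 0; (ii) there exist a nonzero square s and a nonzero non-square n with s + n a nonzero square; and (iii) there exist a nonzero square s and a nonzero non-square n with s + n nonzero and not a square. (In the quotient hyperfield W = F_p/(F_p^×)², this says [1] ⊞ [−1] = {[0], [1], [−1]}.) -/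
/-- For a prime `p ≥ 7` with `p ≡ 3 (mod 4)`: (i) some nonzero square plus nonzero
non-square is `0`; (ii) some such sum is a nonzero square; (iii) some such sum is nonzero
and not a square. (In `W = F_p/(F_p^×)²` this says `[1] ⊞ [−1] = {[0], [1], [−1]}`.) -/
theorem sum_square_nonsquare_all_classes (p : ℕ) [Fact p.Prime]
    (hp7 : 7 ≤ p) (hp : p % 4 = 3) :
    (∃ s n : ZMod p, (s ≠ 0 ∧ ∃ u, s = u ^ 2) ∧ (n ≠ 0 ∧ ¬∃ u, n = u ^ 2) ∧
      s + n = 0) ∧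
    (∃ s n : ZMod p, (s ≠ 0 ∧ ∃ u, s = u ^ 2) ∧ (n ≠ 0 ∧ ¬∃ u, n = u ^ 2) ∧
      (s + n ≠ 0 ∧ ∃ w, s + n = w ^ 2)) ∧
    (∃ s n : ZMod p, (s ≠ 0 ∧ ∃ u, s = u ^ 2) ∧ (n ≠ 0 ∧ ¬∃ u, n = u ^ 2) ∧
      (s + n ≠ 0 ∧ ¬∃ w, s + n = w ^ 2)) := by
  have hne : ∀ k : ℕ, 0 < k → k < 7 → (k : ZMod p) ≠ 0 := by
    intro k h0 h7 h
    rw [ZMod.natCast_eq_zero_iff] at h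
    have := Nat.le_of_dvd h0 h
    omega
  have h3 : (3 : ZMod p) ≠ 0 := by exact_mod_cast hne 3 (by norm_num) (by norm_num)
  have h4 : (4 : ZMod p) ≠ 0 := by exact_mod_cast hne 4 (by norm_num) (by norm_num)
  have h5 : (5 : ZMod p) ≠ 0 := by exact_mod_cast hne 5 (by norm_num) (by norm_num)
  have hneg : ∀ y : ZMod p, y ≠ 0 → -y ^ 2 ≠ 0 ∧ ¬∃ u, -y ^ 2 = u ^ 2 := by
    intro y hy
    refine ⟨neg_ne_zero.mpr (pow_ne_zero 2 hy), ?_⟩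
    rintro ⟨u, hu⟩
    exact ZMod.mod_four_ne_three_of_sq_eq_neg_sq' hy hu.symm hp
  have hsq : ∀ y : ZMod p, y ≠ 0 → y ^ 2 ≠ 0 ∧ ∃ u, y ^ 2 = u ^ 2 :=
    fun y hy => ⟨pow_ne_zero 2 hy, y, rfl⟩
  refine ⟨⟨3 ^ 2, -3 ^ 2, hsq 3 h3, hneg 3 h3, by ring⟩,
    ⟨5 ^ 2, -4 ^ 2, hsq 5 h5, hneg 4 h4, ?_⟩, ⟨3 ^ 2, -5 ^ 2, hsq 3 h3, hneg 5 h5, ?_⟩⟩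
  · have e : (5 : ZMod p) ^ 2 + -4 ^ 2 = 3 ^ 2 := by ring
    rw [e]
    exact hsq 3 h3
  · have e : (3 : ZMod p) ^ 2 + -5 ^ 2 = -4 ^ 2 := by ring
    rw [e]
    exact hneg 4 h4
end

section
/- Let K be the finite field with 49 elements (GaloisField 7 2), let ι ∈ K satisfy ι² = −1, and let G = {1, 2, 4} ⊆ K. Then: (i) the pointwise set-sum {ι·g₁ + (ι+1)·g₂ : g₁, g₂ ∈ G} equals the union of cosets (ι+4)·G ∪ (−ι+4)·G ∪ (−ι+2)·G; and (ii) every element z of this set satisfies z⁸ ∉ {1, 2, 4}. (In the quotient hyperfield L = F_49/(F_7^×)², this says [ι] ⊞ [ι+1] = {[ι−3], [−ι−3], [−ι+2]}, and none of these classes has order at most 8 in L^×; this is the key step showing that L has no proper subhyperfield containing [1], [−1], [ι], hence that L is a minimal extension of the weak hyperfield W containing a root of 1 ⊞ T².) -/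
instance : Fact (Nat.Prime 7) := ⟨by norm_num⟩

/-- The same computation in any field in which `7 = 0`. -/
theorem hypersum_aux {K : Type*} [Field K] (ι : K) (hι : ι ^ 2 = -1) (h7 : (7 : K) = 0)
    (h1 : (1 : K) ≠ 0) :
    ({z : K | ∃ g₁ ∈ ({1, 2, 4} : Set K),
        ∃ g₂ ∈ ({1, 2, 4} : Set K), z = ι * g₁ + (ι + 1) * g₂} =
      {z : K | ∃ g ∈ ({1, 2, 4} : Set K), z = (ι + 4) * g} ∪
      {z : K | ∃ g ∈ ({1, 2, 4} : Set K), z = (-ι + 4) * g} ∪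
      {z : K | ∃ g ∈ ({1, 2, 4} : Set K), z = (-ι + 2) * g}) ∧
    (∀ z ∈ {z : K | ∃ g₁ ∈ ({1, 2, 4} : Set K),
        ∃ g₂ ∈ ({1, 2, 4} : Set K), z = ι * g₁ + (ι + 1) * g₂},
      z ^ 8 ∉ ({1, 2, 4} : Set K)) := by
  have key : ∀ z : K, (∃ g₁ ∈ ({1, 2, 4} : Set K),
        ∃ g₂ ∈ ({1, 2, 4} : Set K), z = ι * g₁ + (ι + 1) * g₂) ↔
      (((∃ g ∈ ({1, 2, 4} : Set K), z = (ι + 4) * g) ∨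
      (∃ g ∈ ({1, 2, 4} : Set K), z = (-ι + 4) * g)) ∨
      (∃ g ∈ ({1, 2, 4} : Set K), z = (-ι + 2) * g)) := by
    intro z
    simp only [Set.mem_insert_iff, Set.mem_singleton_iff, exists_eq_or_imp, exists_eq_left]
    grind
  have pow8 : ∀ g : K, g ∈ ({1, 2, 4} : Set K) → g ^ 8 = g ^ 2 ∧ (g = 1 ∨ g = 2 ∨ g = 4) := by
    intro g hg
    simp only [Set.mem_insert_iff, Set.mem_singleton_iff] at hg
    refine ⟨?_, hg⟩
    rcases hg with rfl | rfl | rfl <;> grind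
  have e1 : (ι + 4) ^ 8 = 3 := by grind
  have e2 : (-ι + 4) ^ 8 = 3 := by grind
  have e3 : (-ι + 2) ^ 8 = 5 := by grind
  refine ⟨Set.ext key, ?_⟩
  intro z hz hz8
  simp only [Set.mem_insert_iff, Set.mem_singleton_iff] at hz8
  rcases (key z).1 hz with (⟨g, hg, rfl⟩ | ⟨g, hg, rfl⟩) | ⟨g, hg, rfl⟩ <;>
    obtain ⟨hg8, hg⟩ := pow8 g hg <;>
    rw [mul_pow, hg8] at hz8 <;>
    simp only [e1, e2, e3] at hz8 <;>
    rcases hg with rfl | rfl | rfl <;> rcases hz8 with h | h | h <;> grind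

/-- In `K = GF(49)` with `ι² = −1` and `G = {1, 2, 4}`: (i) the set-sum
`{ι·g₁ + (ι+1)·g₂ : g₁, g₂ ∈ G}` is the union of the cosets
`(ι+4)·G ∪ (−ι+4)·G ∪ (−ι+2)·G`; and (ii) every element `z` of this set satisfies
`z⁸ ∉ {1, 2, 4}`. (In `L = F_49/(F_7^×)²`:
`[ι] ⊞ [ι+1] = {[ι−3], [−ι−3], [−ι+2]}`, none of which has order at most `8` in `L^×`.) -/
theorem hypersum_iota_iotaPlusOne (ι : GaloisField 7 2) (hι : ι ^ 2 = -1) :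
    ({z : GaloisField 7 2 | ∃ g₁ ∈ ({1, 2, 4} : Set (GaloisField 7 2)),
        ∃ g₂ ∈ ({1, 2, 4} : Set (GaloisField 7 2)), z = ι * g₁ + (ι + 1) * g₂} =
      {z : GaloisField 7 2 | ∃ g ∈ ({1, 2, 4} : Set (GaloisField 7 2)), z = (ι + 4) * g} ∪
      {z : GaloisField 7 2 | ∃ g ∈ ({1, 2, 4} : Set (GaloisField 7 2)), z = (-ι + 4) * g} ∪
      {z : GaloisField 7 2 | ∃ g ∈ ({1, 2, 4} : Set (GaloisField 7 2)), z = (-ι + 2) * g}) ∧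
    (∀ z ∈ {z : GaloisField 7 2 | ∃ g₁ ∈ ({1, 2, 4} : Set (GaloisField 7 2)),
        ∃ g₂ ∈ ({1, 2, 4} : Set (GaloisField 7 2)), z = ι * g₁ + (ι + 1) * g₂},
      z ^ 8 ∉ ({1, 2, 4} : Set (GaloisField 7 2))) := by
  have h7 : (7 : GaloisField 7 2) = 0 := by
    exact_mod_cast CharP.cast_eq_zero (GaloisField 7 2) 7
  have h1 : (1 : GaloisField 7 2) ≠ 0 := one_ne_zero
  exact hypersum_aux ι hι h7 h1
end

section
/- Let K = GaloisField 7 2 with H the subgroup of K^× of units with value in {1, 2, 4}, and let K' = GaloisField 11 2 with H' the subgroup of K'^× of units with value in {1, 3, 4, 5, 9}. Then there is no injective group homomorphism from K^×/H into K'^×/H'. (Since K^×/H has order 16 and K'^×/H' has order 24 and 16 ∤ 24, Lagrange's theorem forbids such an embedding. This is the group-theoretic core of the theorem that the quotient hyperfield F_49/(F_7^×)² is not a subhyperfield — weak or strong — of F_121/(F_11^×)², so the two strong extensions of the weak hyperfield W = F_p/(F_p^×)² containing a root of 1 ⊞ T², built from the quotient structures at p = 7 and p = 11, yield non-isomorphic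 minimal extensions.) -/
instance : Fact (Nat.Prime 11) := ⟨by norm_num⟩

/-- Let `K = GF(49)` with `H ≤ K^×` the subgroup of units with value in `{1, 2, 4}`, and
`K' = GF(121)` with `H' ≤ K'^×` the subgroup of units with value in `{1, 3, 4, 5, 9}`.
Then there is no injective group homomorphism `K^×/H → K'^×/H'`. (Hence
`F_49/(F_7^×)²` is not a subhyperfield — weak or strong — of `F_121/(F_11^×)²`.) -/
theorem no_embedding_of_quotient_groups
    (H : Subgroup (GaloisField 7 2)ˣ)
    (hH : ∀ u : (GaloisField 7 2)ˣ,
      u ∈ H ↔ (u : GaloisField 7 2) ∈ ({1, 2, 4} : Set (GaloisField 7 2)))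
    (H' : Subgroup (GaloisField 11 2)ˣ)
    (hH' : ∀ u : (GaloisField 11 2)ˣ,
      u ∈ H' ↔ (u : GaloisField 11 2) ∈ ({1, 3, 4, 5, 9} : Set (GaloisField 11 2))) :
    ¬∃ φ : ((GaloisField 7 2)ˣ ⧸ H) →* ((GaloisField 11 2)ˣ ⧸ H'),
      Function.Injective φ := by
  rintro ⟨φ, hφ⟩
  have hK : Nat.card (GaloisField 7 2)ˣ = 48 := by
    rw [Nat.card_units, GaloisField.card 7 2 (by norm_num)]; norm_num
  have hK' : Nat.card (GaloisField 11 2)ˣ = 120 := by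
    rw [Nat.card_units, GaloisField.card 11 2 (by norm_num)]; norm_num
  have : Finite (GaloisField 7 2)ˣ := Nat.finite_of_card_ne_zero (by rw [hK]; norm_num)
  have : Finite (GaloisField 11 2)ˣ := Nat.finite_of_card_ne_zero (by rw [hK']; norm_num)
  have h7 : (7 : GaloisField 7 2) = 0 := by
    exact_mod_cast CharP.cast_eq_zero (GaloisField 7 2) 7
  -- every element of `H` has cube one, so `H` has odd order
  have hcube : ∀ u ∈ H, u ^ 3 = 1 := by
    intro u hu
    have h := (hH u).1 hu
    simp only [Set.mem_insert_iff, Set.mem_singleton_iff] at h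
    apply Units.ext
    rw [Units.val_pow_eq_pow_val, Units.val_one]
    rcases h with h | h | h <;> rw [h]
    · ring
    · linear_combination h7
    · linear_combination 9 * h7
  have hodd : ¬ 2 ∣ Nat.card H := by
    intro h2
    obtain ⟨x, hx⟩ := exists_prime_orderOf_dvd_card' (G := H) 2 h2
    have h3 : x ^ 3 = 1 := Subtype.ext (hcube x x.2)
    have := orderOf_dvd_of_pow_eq_one h3
    rw [hx] at this
    omega
  have e1 := H.card_eq_card_quotient_mul_card_subgroup
  have e2 := H'.card_eq_card_quotient_mul_card_subgroup
  rw [hK] at e1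
  rw [hK'] at e2
  have hd : Nat.card ((GaloisField 7 2)ˣ ⧸ H) ∣ Nat.card ((GaloisField 11 2)ˣ ⧸ H') :=
    Subgroup.card_dvd_of_injective φ hφ
  have hcop : Nat.Coprime 16 (Nat.card H) :=
    Nat.Coprime.pow_left 4 ((Nat.Prime.coprime_iff_not_dvd Nat.prime_two).2 hodd)
  have h16 : 16 ∣ Nat.card ((GaloisField 7 2)ˣ ⧸ H) :=
    hcop.dvd_of_dvd_mul_right (by rw [← e1]; norm_num)
  have : 16 ∣ 120 := (h16.trans hd).trans ⟨_, e2⟩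
  omega
end
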